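/- Let y be a nonempty finite family of ground-truth boxes b_j with positive areas, each matched to a predicted box b̂_{π(j)}^λ. Define the box-wise loss L_box(λ) = 1 − |{j : b_j ⊆ b̂_{π(j)}^λ}|/|y| and the pixel-wise loss L_pix(λ) = 1 − (1/|y|) Σ_j area(b_j ∩ b̂_{π(j)}^λ)/area(b_j). Then 0 ≤ L_pix(λ) ≤ L_box(λ) ≤ 1 for every λ. -/

import Mathlib

/-!
For a nondegenerate box `b`, the covered fraction `interArea b c / b.area` lies in `[0, 1]` and
equals `1` when `b ⊆ c`, so it is bounded below by the indicator of `b ⊆ c`. Averaging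
`indicator ≤ covered fraction ≤ 1` over the family and subtracting from `1` gives the chain of
inequalities between the losses.
-/

/-- An axis-aligned bounding box, given by top-left and bottom-right corner coordinates. -/
structure Box where
  left : ℝ
  top : ℝ
  right : ℝ
  bottom : ℝ

/-- Area of a box. -/
def Box.area (b : Box) : ℝ := (b.right - b.left) * (b.bottom - b.top)

/-- Box inclusion `b ⊆ c`, coordinatewise. -/
def Box.subset (b c : Box) : Prop :=
  c.left ≤ b.left ∧ c.top ≤ b.top ∧ b.right ≤ c.right ∧ b.bottom ≤ c.bottom

/-- Area of the (possibly empty/degenerate) intersection rectangle of two boxes. -/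
def interArea (b c : Box) : ℝ :=
  max 0 (min b.right c.right - max b.left c.left) *
    max 0 (min b.bottom c.bottom - max b.top c.top)

theorem interArea_nonneg (b c : Box) : 0 ≤ interArea b c :=
  mul_nonneg (le_max_left _ _) (le_max_left _ _)

theorem interArea_le_area {b : Box} (hx : b.left < b.right) (hy : b.top < b.bottom) (c : Box) :
    interArea b c ≤ b.area := by
  unfold interArea Box.area
  apply mul_le_mul _ _ (le_max_left _ _) (by linarith)
  · apply max_le (by linarith)
    linarith [min_le_left b.right c.right, le_max_left b.left c.left]
  · apply max_le (by linarith)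
    linarith [min_le_left b.bottom c.bottom, le_max_left b.top c.top]

theorem interArea_eq_area_of_subset {b c : Box} (hx : b.left < b.right) (hy : b.top < b.bottom)
    (h : b.subset c) : interArea b c = b.area := by
  obtain ⟨h1, h2, h3, h4⟩ := h
  unfold interArea Box.area
  rw [min_eq_left h3, max_eq_left h1, min_eq_left h4, max_eq_left h2,
    max_eq_right (by linarith), max_eq_right (by linarith)]

open Classical in
/-- For a nonempty finite family of ground-truth boxes with positive areas, each matched
to a predicted box, the pixel-wise loss is a pointwise relaxation of the box-wise loss:
`0 ≤ L_pix ≤ L_box ≤ 1`. -/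
theorem stmt12 (m : ℕ) (hm : 1 ≤ m) (g p : Fin m → Box)
    (hpos : ∀ j, (g j).left < (g j).right ∧ (g j).top < (g j).bottom) :
    let Lbox : ℝ :=
      1 - ((Finset.univ.filter fun j : Fin m => Box.subset (g j) (p j)).card : ℝ) / m
    let Lpix : ℝ := 1 - (1 / (m : ℝ)) * ∑ j, interArea (g j) (p j) / (g j).area
    0 ≤ Lpix ∧ Lpix ≤ Lbox ∧ Lbox ≤ 1 := by
  intro Lbox Lpix
  have hm0 : (0 : ℝ) < m := by exact_mod_cast hm
  have harea : ∀ j, 0 < (g j).area := fun j =>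
    mul_pos (sub_pos.2 (hpos j).1) (sub_pos.2 (hpos j).2)
  have hle : ∑ j, interArea (g j) (p j) / (g j).area ≤ m := by
    calc ∑ j, interArea (g j) (p j) / (g j).area ≤ ∑ _j : Fin m, (1 : ℝ) :=
          Finset.sum_le_sum fun j _ =>
            div_le_one_of_le₀ (interArea_le_area (hpos j).1 (hpos j).2 _) (harea j).le
      _ = m := by simp
  have hge : ((Finset.univ.filter fun j : Fin m => Box.subset (g j) (p j)).card : ℝ)
      ≤ ∑ j, interArea (g j) (p j) / (g j).area := by
    -- The cardinality is the sum of the inclusion indicators, compared termwise.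
    rw [Finset.card_filter, Nat.cast_sum]
    refine Finset.sum_le_sum fun j _ => ?_
    split_ifs with h
    · rw [interArea_eq_area_of_subset (hpos j).1 (hpos j).2 h, div_self (harea j).ne', Nat.cast_one]
    · rw [Nat.cast_zero]
      exact div_nonneg (interArea_nonneg _ _) (harea j).le
  refine ⟨?_, ?_, ?_⟩
  · rw [sub_nonneg, one_div_mul_eq_div]
    exact div_le_one_of_le₀ hle hm0.le
  · refine sub_le_sub_left ?_ 1
    rw [one_div_mul_eq_div]
    exact div_le_div_of_nonneg_right hge hm0.le
  · exact sub_le_self _ (by positivity)
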